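/- Let 𝓗 be a hyperplane arrangement in general position in ℝ^d, S a set of chambers, e ∈ [n], S⁺ := {C ∈ S : C ⊂ H_e⁺}, S⁻ := {C ∈ S : C ⊂ H_e⁻}, and fix A ⊆ [n] with e ∉ A and A ∈ supp(S). Define the bipartite graph Γ_{A,e} with vertex set conn(T_{S⁺}(A)) ⊔ conn(T_{S⁻}(A)) and edge set conn(T_S(A ∪ {e})), where an edge D ∈ conn(T_S(A ∪ {e})) joins the unique component of T_{S⁺}(A) whose boundary contains D to the unique component of T_{S⁻}(A) whose boundary contains D. Then: (i) the connected components of Γ_{A,e} are in bijection with conn(T_S(A)); and (ii) |conn(T_{S⁺}(A))| + |conn(T_{S⁻}(A))| ≤ |conn(T_S(A))| + |conn(T_S(A ∪ {e}))|. -/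

import Mathlib

open Set Topology

noncomputable section

/-- A hyperplane arrangement of `n` affine hyperplanes in `ℝ^d`, given by
nonzero normal vectors and offsets: the `i`-th hyperplane is
`{x | ∑ j, normal i j * x j = offset i}`. -/
structure Arrangement (d n : ℕ) where
  normal : Fin n → (Fin d → ℝ)
  offset : Fin n → ℝ
  normal_ne : ∀ i, normal i ≠ 0

/-- The thickening (regular open hull) `T_S` of a set `S` of chambers. -/
def thickening {d : ℕ} (S : Set (Set (Fin d → ℝ))) : Set (Fin d → ℝ) :=
  interior (closure (⋃ C ∈ S, C))

/-- The set of connected components of a subset `X` of a topological space. -/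
def connComps {α : Type*} [TopologicalSpace α] (X : Set α) : Set (Set α) :=
  {c | ∃ x ∈ X, c = connectedComponentIn X x}

namespace Arrangement

variable {d n : ℕ} (𝓗 : Arrangement d n)

/-- The `i`-th hyperplane of the arrangement. -/
def H (i : Fin n) : Set (Fin d → ℝ) := {x | ∑ j, 𝓗.normal i j * x j = 𝓗.offset i}

/-- The positive open half-space determined by the `i`-th hyperplane. -/
def pos (i : Fin n) : Set (Fin d → ℝ) := {x | 𝓗.offset i < ∑ j, 𝓗.normal i j * x j}

/-- The negative open half-space determined by the `i`-th hyperplane. -/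
def neg (i : Fin n) : Set (Fin d → ℝ) := {x | ∑ j, 𝓗.normal i j * x j < 𝓗.offset i}

/-- The complement of the union of the hyperplanes. -/
def free : Set (Fin d → ℝ) := {x | ∀ i, x ∉ 𝓗.H i}

/-- The chambers: connected components of the complement of the hyperplanes. -/
def chambers : Set (Set (Fin d → ℝ)) :=
  {C | ∃ x ∈ 𝓗.free, C = connectedComponentIn 𝓗.free x}

/-- General position: the normals of any `≤ d` hyperplanes are linearly independent
(so that their intersection is an affine subspace of the right dimension), and no
`d+1` hyperplanes have a common point. -/
def GeneralPosition : Prop :=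
  (∀ A : Finset (Fin n), A.card ≤ d →
      LinearIndependent ℝ (fun i : A => 𝓗.normal i.1)) ∧
  (∀ A : Finset (Fin n), A.card = d + 1 → (⋂ i ∈ A, 𝓗.H i) = ∅)

/-- Hyperplane `e` separates `C` from `C'`. -/
def Separates (e : Fin n) (C C' : Set (Fin d → ℝ)) : Prop :=
  (C ⊆ 𝓗.pos e ∧ C' ⊆ 𝓗.neg e) ∨ (C ⊆ 𝓗.neg e ∧ C' ⊆ 𝓗.pos e)

/-- Adjacency in the chamber graph: two chambers are adjacent iff they are separated
by exactly one hyperplane (equivalently, share a common facet). -/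
def Adj (C C' : Set (Fin d → ℝ)) : Prop :=
  C ∈ 𝓗.chambers ∧ C' ∈ 𝓗.chambers ∧ ∃! e : Fin n, 𝓗.Separates e C C'

/-- The edge boundary of a set `S` of chambers, encoded as the set of ordered pairs
`(C, C')` of adjacent chambers with `C ∈ S` and `C' ∉ S` (each boundary edge is thus
counted exactly once). -/
def edgeBoundary (S : Set (Set (Fin d → ℝ))) :
    Set ((Set (Fin d → ℝ)) × (Set (Fin d → ℝ))) :=
  {q | q.1 ∈ S ∧ q.2 ∉ S ∧ 𝓗.Adj q.1 q.2}

/-- The stratum `T_S(A) = T_S ∩ L_A`. -/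
def stratum (S : Set (Set (Fin d → ℝ))) (A : Finset (Fin n)) : Set (Fin d → ℝ) :=
  thickening S ∩ ⋂ i ∈ A, 𝓗.H i

/-- The support of `S`: those `A` with nonempty stratum. -/
def supp (S : Set (Set (Fin d → ℝ))) : Set (Finset (Fin n)) :=
  {A | (𝓗.stratum S A).Nonempty}

/-- `H_f` bounds the stratum `T_S(A)`: the stratum lies entirely in one of the open
half-spaces of `H_f`, and `H_f` meets the closure of the stratum within `L_A`. -/
def Bounds (f : Fin n) (S : Set (Set (Fin d → ℝ))) (A : Finset (Fin n)) : Prop :=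
  (𝓗.stratum S A ⊆ 𝓗.pos f ∨ 𝓗.stratum S A ⊆ 𝓗.neg f) ∧
  (𝓗.H f ∩ closure (𝓗.stratum S A) ∩ ⋂ i ∈ A, 𝓗.H i).Nonempty

/-- `S` is strata-connected if every nonempty stratum is connected. -/
def StrataConnected (S : Set (Set (Fin d → ℝ))) : Prop :=
  ∀ A ∈ 𝓗.supp S, IsConnected (𝓗.stratum S A)

end Arrangement

/-- The generalized binomial coefficient `C(x, i) = x(x-1)⋯(x-i+1)/i!`. -/
noncomputable def gchoose (x : ℝ) (i : ℕ) : ℝ :=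
  (∏ j ∈ Finset.range i, (x - j)) / (Nat.factorial i)

/-- The gluing graph `Γ_{A,e}`: vertices are the connected components of
`T_{S⁺}(A)` and of `T_{S⁻}(A)`, and two vertices are adjacent iff some connected
component `D` of `T_S(A ∪ {e})` lies in the closure of both. -/
def gluingGraph {d n : ℕ} (𝓗 : Arrangement d n) (S : Set (Set (Fin d → ℝ)))
    (e : Fin n) (A : Finset (Fin n)) :
    SimpleGraph ((connComps (𝓗.stratum {C ∈ S | C ⊆ 𝓗.pos e} A)) ⊕
      (connComps (𝓗.stratum {C ∈ S | C ⊆ 𝓗.neg e} A))) where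
  Adj u v := u ≠ v ∧ ∃ D ∈ connComps (𝓗.stratum S (insert e A)),
      D ⊆ closure (Sum.elim Subtype.val Subtype.val u) ∧
      D ⊆ closure (Sum.elim Subtype.val Subtype.val v)
  symm := by
    constructor
    rintro u v ⟨huv, D, hD, h1, h2⟩
    exact ⟨huv.symm, D, hD, h2, h1⟩
  loopless := by
    constructor
    rintro u ⟨h, -⟩
    exact h rfl

namespace SimpleGraph

/-- A finite graph has at most as many vertices as connected components and edges together. -/
theorem card_vert_le_card_connectedComponent_add_card_edgeSet {V : Type*} [Finite V]
    (G : SimpleGraph V) :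
    Nat.card V ≤ Nat.card G.ConnectedComponent + Nat.card G.edgeSet := by
  classical
  have := Fintype.ofFinite V
  have := Fintype.ofFinite G.ConnectedComponent
  have hV : Nat.card V = ∑ c : G.ConnectedComponent, Nat.card c := by
    rw [← Nat.card_sigma]
    exact Nat.card_congr (Equiv.sigmaFiberEquiv G.connectedComponentMk).symm
  have hE : ∑ c : G.ConnectedComponent, Nat.card c.toSimpleGraph.edgeSet
      ≤ Nat.card G.edgeSet := by
    rw [← Nat.card_sigma]
    refine Nat.card_le_card_of_injective
      (fun q => (⟨Sym2.map Subtype.val q.2.1, ?_⟩ : G.edgeSet)) ?_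
    · obtain ⟨c, ⟨a, ha⟩⟩ := q
      induction a using Sym2.ind with
      | _ a b => exact ha
    · rintro ⟨c, ⟨a, ha⟩⟩ ⟨c', ⟨a', ha'⟩⟩ h
      have h : Sym2.map Subtype.val a = Sym2.map Subtype.val a' := congrArg Subtype.val h
      have hc : c = c' := by
        induction a using Sym2.ind with
        | _ x y =>
          have hx : (x : V) ∈ Sym2.map Subtype.val a' := by rw [← h]; simp
          obtain ⟨z, -, hz⟩ := Sym2.mem_map.1 hx
          have h1 : G.connectedComponentMk (x : V) = c := x.2
          have h2 : G.connectedComponentMk (z : V) = c' := z.2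
          rw [← h1, ← h2, hz]
      subst hc
      cases Sym2.map.injective Subtype.val_injective h
      rfl
  calc Nat.card V = ∑ c : G.ConnectedComponent, Nat.card c := hV
    _ ≤ ∑ c : G.ConnectedComponent, (Nat.card c.toSimpleGraph.edgeSet + 1) :=
        Finset.sum_le_sum fun c _ => c.connected_toSimpleGraph.card_vert_le_card_edgeSet_add_one
    _ ≤ Nat.card G.ConnectedComponent + Nat.card G.edgeSet := by
        rw [Finset.sum_add_distrib]
        simp only [Finset.sum_const, Finset.card_univ, smul_eq_mul, mul_one,
          Nat.card_eq_fintype_card (α := G.ConnectedComponent)]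
        omega

end SimpleGraph

section ConnComps

variable {α : Type*} [TopologicalSpace α] {X : Set α} {c c' : Set α}

theorem subset_of_mem_connComps (hc : c ∈ connComps X) : c ⊆ X := by
  obtain ⟨x, -, rfl⟩ := hc
  exact connectedComponentIn_subset X x

theorem nonempty_of_mem_connComps (hc : c ∈ connComps X) : c.Nonempty := by
  obtain ⟨x, hx, rfl⟩ := hc
  exact ⟨x, mem_connectedComponentIn hx⟩

theorem isPreconnected_of_mem_connComps (hc : c ∈ connComps X) : IsPreconnected c := by
  obtain ⟨x, -, rfl⟩ := hc
  exact isPreconnected_connectedComponentIn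

theorem eq_connectedComponentIn_of_mem_connComps (hc : c ∈ connComps X) {x : α} (hx : x ∈ c) :
    c = connectedComponentIn X x := by
  obtain ⟨y, -, rfl⟩ := hc
  exact connectedComponentIn_eq hx

theorem IsPreconnected.subset_of_mem_connComps {s : Set α} (hs : IsPreconnected s) (hsX : s ⊆ X)
    (hc : c ∈ connComps X) (h : (s ∩ c).Nonempty) : s ⊆ c := by
  obtain ⟨x, hxs, hxc⟩ := h
  rw [eq_connectedComponentIn_of_mem_connComps hc hxc]
  exact hs.subset_connectedComponentIn hxs hsX

theorem eq_of_mem_connComps (hc : c ∈ connComps X) (hc' : c' ∈ connComps X)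
    (h : (c ∩ c').Nonempty) : c = c' := by
  obtain ⟨x, hx, hx'⟩ := h
  rw [eq_connectedComponentIn_of_mem_connComps hc hx,
    eq_connectedComponentIn_of_mem_connComps hc' hx']

end ConnComps

/-- `Z` cuts `X` into the two relatively open pieces `P` and `M`: `Z` is contained in the closure
of both, and locally each of the three pieces is connected. -/
structure IsCut {α : Type*} [TopologicalSpace α] (X P M Z : Set α) : Prop where
  eq_union : X = P ∪ M ∪ Z
  disjoint : Disjoint P M
  mem_nhdsWithin_left : ∀ x ∈ P, P ∈ 𝓝[X] x
  mem_nhdsWithin_right : ∀ x ∈ M, M ∈ 𝓝[X] x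
  subset_closure_left : Z ⊆ closure P
  subset_closure_right : Z ⊆ closure M
  exists_isOpen : ∀ x ∈ X, ∃ O, IsOpen O ∧ x ∈ O ∧ IsPreconnected (O ∩ P) ∧
    IsPreconnected (O ∩ M) ∧ IsPreconnected (O ∩ Z)

/-- The graph on the connected components of `P` and of `M`, two of them being adjacent when their
closures contain a common connected component of `Z`. -/
def componentGraph {α : Type*} [TopologicalSpace α] (P M Z : Set α) :
    SimpleGraph (connComps P ⊕ connComps M) where
  Adj u v := u ≠ v ∧ ∃ D ∈ connComps Z,
      D ⊆ closure (Sum.elim Subtype.val Subtype.val u) ∧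
      D ⊆ closure (Sum.elim Subtype.val Subtype.val v)
  symm := ⟨fun _ _ ⟨huv, D, hD, h1, h2⟩ => ⟨huv.symm, D, hD, h2, h1⟩⟩
  loopless := ⟨fun _ h => h.1 rfl⟩

namespace IsCut

variable {α : Type*} [TopologicalSpace α] {X P M Z : Set α}

theorem symm (h : IsCut X P M Z) : IsCut X M P Z where
  eq_union := by rw [h.eq_union, union_comm P M]
  disjoint := h.disjoint.symm
  mem_nhdsWithin_left := h.mem_nhdsWithin_right
  mem_nhdsWithin_right := h.mem_nhdsWithin_left
  subset_closure_left := h.subset_closure_right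
  subset_closure_right := h.subset_closure_left
  exists_isOpen x hx := by
    obtain ⟨O, hO, hxO, h1, h2, h3⟩ := h.exists_isOpen x hx
    exact ⟨O, hO, hxO, h2, h1, h3⟩

theorem left_subset (h : IsCut X P M Z) : P ⊆ X := by
  rw [h.eq_union]; exact fun x hx => Or.inl (Or.inl hx)

theorem right_subset (h : IsCut X P M Z) : M ⊆ X := h.symm.left_subset

theorem middle_subset (h : IsCut X P M Z) : Z ⊆ X := by
  rw [h.eq_union]; exact fun x hx => Or.inr hx

theorem notMem_closure_right (h : IsCut X P M Z) {x : α} (hx : x ∈ P) : x ∉ closure M := by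
  intro hxM
  have := mem_closure_iff_nhdsWithin_neBot.1 hxM
  have hP : P ∈ 𝓝[M] x := nhdsWithin_mono x h.right_subset (h.mem_nhdsWithin_left x hx)
  obtain ⟨y, hyP, hyM⟩ := Filter.nonempty_of_mem (Filter.inter_mem hP self_mem_nhdsWithin)
  exact h.disjoint.le_bot ⟨hyP, hyM⟩

/-- Near a point of `X` only one component of `P` is visible. -/
theorem eventually_unique_left (h : IsCut X P M Z) {x : α} (hx : x ∈ X) :
    ∀ᶠ y in 𝓝 x, ∀ u ∈ connComps P, ∀ u' ∈ connComps P,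
      x ∈ closure u → y ∈ closure u' → u = u' := by
  obtain ⟨O, hO, hxO, hP, -, -⟩ := h.exists_isOpen x hx
  filter_upwards [hO.mem_nhds hxO] with y hy u hu u' hu' hxu hyu'
  obtain ⟨a, haO, ha⟩ := mem_closure_iff.1 hxu O hO hxO
  obtain ⟨b, hbO, hb⟩ := mem_closure_iff.1 hyu' O hO hy
  have h1 : O ∩ P ⊆ u := hP.subset_of_mem_connComps inter_subset_right hu
    ⟨a, ⟨haO, subset_of_mem_connComps hu ha⟩, ha⟩
  exact eq_of_mem_connComps hu hu' ⟨b, h1 ⟨hbO, subset_of_mem_connComps hu' hb⟩, hb⟩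

theorem unique_left (h : IsCut X P M Z) {x : α} (hx : x ∈ X) {u u' : Set α}
    (hu : u ∈ connComps P) (hu' : u' ∈ connComps P) (hxu : x ∈ closure u)
    (hxu' : x ∈ closure u') : u = u' :=
  (h.eventually_unique_left hx).self_of_nhds u hu u' hu' hxu hxu'

theorem exists_mem_closure_left (h : IsCut X P M Z) {x : α} (hx : x ∈ Z) :
    ∃ u ∈ connComps P, x ∈ closure u := by
  obtain ⟨O, hO, hxO, hP, -, -⟩ := h.exists_isOpen x (h.middle_subset hx)
  have hxP := h.subset_closure_left hx
  obtain ⟨a, haO, ha⟩ := mem_closure_iff.1 hxP O hO hxO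
  refine ⟨connectedComponentIn P a, ⟨a, ha, rfl⟩, ?_⟩
  refine closure_mono (hP.subset_connectedComponentIn ⟨haO, ha⟩ inter_subset_right) ?_
  exact hO.inter_closure ⟨hxO, hxP⟩

theorem subset_closure_of_mem (h : IsCut X P M Z) {D u : Set α} (hD : D ∈ connComps Z)
    (hu : u ∈ connComps P) {x : α} (hxD : x ∈ D) (hxu : x ∈ closure u) : D ⊆ closure u := by
  intro y hy
  have hDZ := subset_of_mem_connComps hD
  refine ((isPreconnected_of_mem_connComps hD).induction₂
    (fun a b => a ∈ closure u ↔ b ∈ closure u) ?_ (fun _ _ _ _ _ _ => Iff.trans)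
    (fun _ _ _ _ => Iff.symm) hxD hy).1 hxu
  intro a ha
  filter_upwards [nhdsWithin_le_nhds (h.eventually_unique_left (h.middle_subset (hDZ ha))),
    self_mem_nhdsWithin] with b hb hbD
  obtain ⟨v, hv, hav⟩ := h.exists_mem_closure_left (hDZ ha)
  obtain ⟨w, hw, hbw⟩ := h.exists_mem_closure_left (hDZ hbD)
  constructor
  · intro hau
    rwa [hb u hu w hw hau hbw]
  · intro hbu
    rwa [← hb v hv u hu hav hbu]

theorem eventually_mem_middle (h : IsCut X P M Z) {x : α} (hx : x ∈ X) :
    ∀ᶠ y in 𝓝[X] x, ∀ u ∈ connComps P, ∀ m ∈ connComps M,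
      x ∈ closure u → y ∈ closure m → x ∈ Z ∧ x ∈ closure m := by
  rcases h.eq_union ▸ hx with (hxP | hxM) | hxZ
  · filter_upwards [h.mem_nhdsWithin_left x hxP] with y hy u _ m hm _ hym
    exact (h.notMem_closure_right hy (closure_mono (subset_of_mem_connComps hm) hym)).elim
  · refine Filter.Eventually.of_forall fun y u hu m _ hxu => ?_
    exact (h.symm.notMem_closure_right hxM (closure_mono (subset_of_mem_connComps hu) hxu)).elim
  · filter_upwards [nhdsWithin_le_nhds (h.symm.eventually_unique_left hx)] with y hy u _ m hm _ hym
    obtain ⟨m', hm', hxm'⟩ := h.symm.exists_mem_closure_left hxZ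
    exact ⟨hxZ, hy m' hm' m hm hxm' hym ▸ hxm'⟩

theorem componentGraph_adj (h : IsCut X P M Z) {x : α} (hx : x ∈ Z) (u : connComps P)
    (m : connComps M) (hxu : x ∈ closure u.1) (hxm : x ∈ closure m.1) :
    (componentGraph P M Z).Adj (Sum.inl u) (Sum.inr m) := by
  have hD : connectedComponentIn Z x ∈ connComps Z := ⟨x, hx, rfl⟩
  exact ⟨Sum.inl_ne_inr, _, hD,
    h.subset_closure_of_mem hD u.2 (mem_connectedComponentIn hx) hxu,
    h.symm.subset_closure_of_mem hD m.2 (mem_connectedComponentIn hx) hxm⟩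

theorem eventually_reachable (h : IsCut X P M Z) {x : α} (hx : x ∈ X) :
    ∀ᶠ y in 𝓝[X] x, ∀ u v : connComps P ⊕ connComps M,
      x ∈ closure (Sum.elim Subtype.val Subtype.val u) →
      y ∈ closure (Sum.elim Subtype.val Subtype.val v) →
      (componentGraph P M Z).Reachable u v := by
  filter_upwards [nhdsWithin_le_nhds (h.eventually_unique_left hx),
    nhdsWithin_le_nhds (h.symm.eventually_unique_left hx), h.eventually_mem_middle hx,
    h.symm.eventually_mem_middle hx] with y h1 h2 h3 h4 u v hu hv
  rcases u with u | u <;> rcases v with v | v <;> simp only [Sum.elim_inl, Sum.elim_inr] at hu hv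
  · rw [Subtype.ext (h1 u u.2 v v.2 hu hv)]
  · obtain ⟨hxZ, hxv⟩ := h3 u u.2 v v.2 hu hv
    exact (h.componentGraph_adj hxZ u v hu hxv).reachable
  · obtain ⟨hxZ, hxv⟩ := h4 u u.2 v v.2 hu hv
    exact (h.componentGraph_adj hxZ v u hxv hu).symm.reachable
  · rw [Subtype.ext (h2 u u.2 v v.2 hu hv)]

theorem exists_mem_closure (h : IsCut X P M Z) {x : α} (hx : x ∈ X) :
    ∃ u : connComps P ⊕ connComps M, x ∈ closure (Sum.elim Subtype.val Subtype.val u) := by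
  rcases h.eq_union ▸ hx with (hxP | hxM) | hxZ
  · exact ⟨Sum.inl ⟨_, x, hxP, rfl⟩, subset_closure (mem_connectedComponentIn hxP)⟩
  · exact ⟨Sum.inr ⟨_, x, hxM, rfl⟩, subset_closure (mem_connectedComponentIn hxM)⟩
  · obtain ⟨u, hu, hxu⟩ := h.exists_mem_closure_left hxZ
    exact ⟨Sum.inl ⟨u, hu⟩, hxu⟩

theorem reachable_of_mem_connComps (h : IsCut X P M Z) {c : Set α} (hc : c ∈ connComps X)
    {x y : α} (hx : x ∈ c) (hy : y ∈ c) {u v : connComps P ⊕ connComps M}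
    (hu : x ∈ closure (Sum.elim Subtype.val Subtype.val u))
    (hv : y ∈ closure (Sum.elim Subtype.val Subtype.val v)) :
    (componentGraph P M Z).Reachable u v := by
  have hcX := subset_of_mem_connComps hc
  refine (isPreconnected_of_mem_connComps hc).induction₂
    (fun a b => ∀ u v : connComps P ⊕ connComps M,
      a ∈ closure (Sum.elim Subtype.val Subtype.val u) →
      b ∈ closure (Sum.elim Subtype.val Subtype.val v) →
      (componentGraph P M Z).Reachable u v) ?_ ?_ ?_ hx hy u v hu hv
  · exact fun a ha => nhdsWithin_mono a hcX (h.eventually_reachable (hcX ha))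
  · intro a b d _ hb _ hab hbd u v hu hv
    obtain ⟨w, hw⟩ := h.exists_mem_closure (hcX hb)
    exact (hab u w hu hw).trans (hbd w v hw hv)
  · exact fun a b _ _ hab u v hu hv => (hab v u hv hu).symm

theorem elim_subset (h : IsCut X P M Z) (u : connComps P ⊕ connComps M) :
    (Sum.elim Subtype.val Subtype.val u : Set α) ⊆ X := by
  rcases u with u | u
  · exact (subset_of_mem_connComps u.2).trans h.left_subset
  · exact (subset_of_mem_connComps u.2).trans h.right_subset

theorem elim_nonempty (u : connComps P ⊕ connComps M) :
    (Sum.elim Subtype.val Subtype.val u : Set α).Nonempty := by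
  rcases u with u | u <;> exact nonempty_of_mem_connComps u.2

theorem elim_isPreconnected (u : connComps P ⊕ connComps M) :
    IsPreconnected (Sum.elim Subtype.val Subtype.val u : Set α) := by
  rcases u with u | u <;> exact isPreconnected_of_mem_connComps u.2

theorem connectedComponentIn_eq_of_mem_closure (h : IsCut X P M Z)
    (u : connComps P ⊕ connComps M) {x y : α} (hx : x ∈ X)
    (hxu : x ∈ closure (Sum.elim Subtype.val Subtype.val u))
    (hy : y ∈ (Sum.elim Subtype.val Subtype.val u : Set α)) :
    connectedComponentIn X y = connectedComponentIn X x := by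
  refine connectedComponentIn_eq (IsPreconnected.subset_connectedComponentIn
    ((elim_isPreconnected u).subset_closure (subset_insert x _)
      (insert_subset hxu subset_closure)) (mem_insert_of_mem x hy)
      (insert_subset hx (h.elim_subset u)) (mem_insert x _))

/-- The connected components of the component graph correspond to those of `X`. -/
theorem nonempty_connectedComponent_equiv (h : IsCut X P M Z) :
    Nonempty ((componentGraph P M Z).ConnectedComponent ≃ connComps X) := by
  choose pt hpt using fun u : connComps P ⊕ connComps M => elim_nonempty u
  have hptX := fun u => h.elim_subset u (hpt u)
  let φ : connComps P ⊕ connComps M → connComps X :=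
    fun u => ⟨connectedComponentIn X (pt u), pt u, hptX u, rfl⟩
  have hφ : ∀ u v, (componentGraph P M Z).Adj u v → φ u = φ v := by
    rintro u v ⟨-, D, hD, hu, hv⟩
    obtain ⟨x, hx⟩ := nonempty_of_mem_connComps hD
    have hxX := h.middle_subset (subset_of_mem_connComps hD hx)
    exact Subtype.ext <|
      (h.connectedComponentIn_eq_of_mem_closure u hxX (hu hx) (hpt u)).trans
        (h.connectedComponentIn_eq_of_mem_closure v hxX (hv hx) (hpt v)).symm
  have hφ' : ∀ u v, (componentGraph P M Z).Reachable u v → φ u = φ v := by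
    rintro u v ⟨p⟩
    induction p with
    | nil => rfl
    | cons hadj _ ih => exact (hφ _ _ hadj).trans ih
  refine ⟨Equiv.ofBijective
    (SimpleGraph.ConnectedComponent.lift φ fun u v p _ => hφ' u v p.reachable) ⟨?_, ?_⟩⟩
  · intro a b
    induction a using SimpleGraph.ConnectedComponent.ind with | _ u
    induction b using SimpleGraph.ConnectedComponent.ind with | _ v
    intro huv
    have huv : connectedComponentIn X (pt u) = connectedComponentIn X (pt v) :=
      congrArg Subtype.val huv
    refine SimpleGraph.ConnectedComponent.sound ?_
    refine h.reachable_of_mem_connComps ⟨pt u, hptX u, rfl⟩ (mem_connectedComponentIn (hptX u))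
      ?_ (subset_closure (hpt u)) (subset_closure (hpt v))
    rw [huv]
    exact mem_connectedComponentIn (hptX v)
  · rintro ⟨_, x, hx, rfl⟩
    obtain ⟨u, hu⟩ := h.exists_mem_closure hx
    exact ⟨SimpleGraph.connectedComponentMk _ u,
      Subtype.ext (h.connectedComponentIn_eq_of_mem_closure u hx hu (hpt u))⟩

theorem exists_edge_eq (h : IsCut X P M Z) {D : Set α} (hD : D ∈ connComps Z)
    {u v : connComps P ⊕ connComps M} (huv : u ≠ v)
    (hu : D ⊆ closure (Sum.elim Subtype.val Subtype.val u))
    (hv : D ⊆ closure (Sum.elim Subtype.val Subtype.val v)) :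
    ∃ (p : connComps P) (m : connComps M), D ⊆ closure p.1 ∧ D ⊆ closure m.1 ∧
      s(u, v) = s(Sum.inl p, Sum.inr m) := by
  obtain ⟨x, hx⟩ := nonempty_of_mem_connComps hD
  have hxX := h.middle_subset (subset_of_mem_connComps hD hx)
  rcases u with u | u <;> rcases v with v | v
  · exact (huv (congrArg _ (Subtype.ext (h.unique_left hxX u.2 v.2 (hu hx) (hv hx))))).elim
  · exact ⟨u, v, hu, hv, rfl⟩
  · exact ⟨v, u, hv, hu, Sym2.eq_swap⟩
  · exact (huv (congrArg _ (Subtype.ext (h.symm.unique_left hxX u.2 v.2 (hu hx) (hv hx))))).elim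

theorem card_edgeSet_le (h : IsCut X P M Z) (hZ : (connComps Z).Finite) :
    Nat.card (componentGraph P M Z).edgeSet ≤ (connComps Z).ncard := by
  have key : ∀ q : (componentGraph P M Z).edgeSet, ∃ D : connComps Z,
      ∃ (p : connComps P) (m : connComps M), D.1 ⊆ closure p.1 ∧ D.1 ⊆ closure m.1 ∧
        q.1 = s(Sum.inl p, Sum.inr m) := by
    rintro ⟨q, hq⟩
    induction q using Sym2.ind with | _ u v
    obtain ⟨huv, D, hD, hu, hv⟩ := hq
    exact ⟨⟨D, hD⟩, h.exists_edge_eq hD huv hu hv⟩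
  choose f p m hp hm hq using key
  have := hZ.to_subtype
  rw [← Nat.card_coe_set_eq]
  refine Nat.card_le_card_of_injective f fun q q' hqq => Subtype.ext ?_
  obtain ⟨x, hx⟩ := nonempty_of_mem_connComps (f q).2
  have hxX := h.middle_subset (subset_of_mem_connComps (f q).2 hx)
  rw [hq, hq, Subtype.ext (h.unique_left hxX (p q).2 (p q').2 (hp q hx) (hp q' (hqq ▸ hx))),
    Subtype.ext (h.symm.unique_left hxX (m q).2 (m q').2 (hm q hx) (hm q' (hqq ▸ hx)))]

theorem ncard_add_ncard_le (h : IsCut X P M Z) (hP : (connComps P).Finite)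
    (hM : (connComps M).Finite) (hZ : (connComps Z).Finite) :
    (connComps P).ncard + (connComps M).ncard ≤ (connComps X).ncard + (connComps Z).ncard := by
  have := hP.to_subtype
  have := hM.to_subtype
  obtain ⟨φ⟩ := h.nonempty_connectedComponent_equiv
  have hV := (componentGraph P M Z).card_vert_le_card_connectedComponent_add_card_edgeSet
  rw [Nat.card_sum, Nat.card_congr φ, Nat.card_coe_set_eq, Nat.card_coe_set_eq,
    Nat.card_coe_set_eq] at hV
  exact hV.trans (Nat.add_le_add_left (h.card_edgeSet_le hZ) _)

end IsCut

namespace Arrangement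

variable {d n : ℕ} (𝓗 : Arrangement d n)

theorem isLinearMap_sum_mul (a : Fin d → ℝ) : IsLinearMap ℝ fun x : Fin d → ℝ => ∑ j, a j * x j :=
  ⟨fun x y => dotProduct_add a x y, fun t x => dotProduct_smul t a x⟩

theorem continuous_sum_mul (a : Fin d → ℝ) : Continuous fun x : Fin d → ℝ => ∑ j, a j * x j := by
  fun_prop

theorem isOpen_pos (i : Fin n) : IsOpen (𝓗.pos i) :=
  isOpen_lt continuous_const (continuous_sum_mul _)

theorem isOpen_neg (i : Fin n) : IsOpen (𝓗.neg i) :=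
  isOpen_lt (continuous_sum_mul _) continuous_const

theorem convex_pos (i : Fin n) : Convex ℝ (𝓗.pos i) :=
  convex_halfSpace_gt (isLinearMap_sum_mul _) _

theorem convex_neg (i : Fin n) : Convex ℝ (𝓗.neg i) :=
  convex_halfSpace_lt (isLinearMap_sum_mul _) _

theorem convex_H (i : Fin n) : Convex ℝ (𝓗.H i) :=
  convex_hyperplane (isLinearMap_sum_mul _) _

theorem convex_iInter_H (A : Finset (Fin n)) : Convex ℝ (⋂ i ∈ A, 𝓗.H i) :=
  convex_iInter₂ fun i _ => 𝓗.convex_H i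

theorem disjoint_pos_neg (i : Fin n) : Disjoint (𝓗.pos i) (𝓗.neg i) :=
  Set.disjoint_left.2 fun _ h h' => lt_asymm (mem_ofPred.1 h) (mem_ofPred.1 h')

theorem pos_union_neg_union_H (i : Fin n) : 𝓗.pos i ∪ 𝓗.neg i ∪ 𝓗.H i = univ := by
  refine eq_univ_of_forall fun x => ?_
  rcases lt_trichotomy (∑ j, 𝓗.normal i j * x j) (𝓗.offset i) with h | h | h
  · exact Or.inl (Or.inr h)
  · exact Or.inr h
  · exact Or.inl (Or.inl h)

/-- A vector crossing the `i`-th hyperplane. -/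
theorem exists_sum_mul_pos (i : Fin n) : ∃ v : Fin d → ℝ, 0 < ∑ j, 𝓗.normal i j * v j := by
  refine ⟨𝓗.normal i, lt_of_le_of_ne (Finset.sum_nonneg fun j _ => mul_self_nonneg _) ?_⟩
  intro h
  exact 𝓗.normal_ne i (dotProduct_self_eq_zero.1 h.symm)

theorem mem_closure_of_add_smul_mem {s : Set (Fin d → ℝ)} {x v : Fin d → ℝ}
    (h : ∀ᶠ t : ℝ in 𝓝[>] 0, x + t • v ∈ s) : x ∈ closure s := by
  have hc : Filter.Tendsto (fun t : ℝ => x + t • v) (𝓝[>] 0) (𝓝 x) := by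
    have : Continuous fun t : ℝ => x + t • v := by fun_prop
    simpa using (this.tendsto 0).mono_left nhdsWithin_le_nhds
  exact mem_closure_of_tendsto hc h

theorem eventually_add_smul_mem_thickening {S : Set (Set (Fin d → ℝ))} {x : Fin d → ℝ}
    (hx : x ∈ thickening S) (v : Fin d → ℝ) : ∀ᶠ t : ℝ in 𝓝[>] 0, x + t • v ∈ thickening S := by
  have : Continuous fun t : ℝ => x + t • v := by fun_prop
  refine nhdsWithin_le_nhds (this.continuousAt.eventually_mem (isOpen_interior.mem_nhds ?_))
  simpa [thickening] using hx

theorem add_smul_mem_pos {i : Fin n} {x v : Fin d → ℝ} (hx : x ∈ 𝓗.H i)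
    (hv : 0 < ∑ j, 𝓗.normal i j * v j) {t : ℝ} (ht : 0 < t) : x + t • v ∈ 𝓗.pos i := by
  have h := (isLinearMap_sum_mul (𝓗.normal i))
  have hx : ∑ j, 𝓗.normal i j * x j = 𝓗.offset i := hx
  have h2 : ∑ j, 𝓗.normal i j * (x + t • v) j = 𝓗.offset i + t * ∑ j, 𝓗.normal i j * v j := by
    rw [h.map_add, h.map_smul, hx, smul_eq_mul]
  change 𝓗.offset i < ∑ j, 𝓗.normal i j * (x + t • v) j
  rw [h2]
  exact lt_add_of_pos_right _ (mul_pos ht hv)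

theorem add_smul_mem_neg {i : Fin n} {x v : Fin d → ℝ} (hx : x ∈ 𝓗.H i)
    (hv : 0 < ∑ j, 𝓗.normal i j * v j) {t : ℝ} (ht : 0 < t) : x + t • (-v) ∈ 𝓗.neg i := by
  have h := (isLinearMap_sum_mul (𝓗.normal i))
  have hx : ∑ j, 𝓗.normal i j * x j = 𝓗.offset i := hx
  have h2 : ∑ j, 𝓗.normal i j * (x + t • (-v)) j
      = 𝓗.offset i - t * ∑ j, 𝓗.normal i j * v j := by
    rw [h.map_add, h.map_smul, h.map_neg, hx, smul_eq_mul]; ring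
  change ∑ j, 𝓗.normal i j * (x + t • (-v)) j < 𝓗.offset i
  rw [h2]
  exact sub_lt_self _ (mul_pos ht hv)

theorem add_smul_mem_H {i : Fin n} {x v : Fin d → ℝ} (hx : x ∈ 𝓗.H i)
    (hv : ∑ j, 𝓗.normal i j * v j = 0) (t : ℝ) : x + t • v ∈ 𝓗.H i := by
  have h := (isLinearMap_sum_mul (𝓗.normal i))
  have hx : ∑ j, 𝓗.normal i j * x j = 𝓗.offset i := hx
  change ∑ j, 𝓗.normal i j * (x + t • v) j = 𝓗.offset i
  rw [h.map_add, h.map_smul, hx, hv, smul_zero, add_zero]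

theorem interior_compl_neg_subset (i : Fin n) : interior ((𝓗.neg i)ᶜ) ⊆ 𝓗.pos i := by
  intro x hx
  rcases (𝓗.pos_union_neg_union_H i).ge (mem_univ x) with (h | h) | h
  · exact h
  · exact (interior_subset hx h).elim
  · obtain ⟨v, hv⟩ := 𝓗.exists_sum_mul_pos i
    have hcl : x ∈ closure (𝓗.neg i) := mem_closure_of_add_smul_mem (v := -v) <| by
      filter_upwards [self_mem_nhdsWithin] with t ht using 𝓗.add_smul_mem_neg h hv ht
    rw [interior_compl] at hx
    exact (hx hcl).elim

theorem interior_compl_pos_subset (i : Fin n) : interior ((𝓗.pos i)ᶜ) ⊆ 𝓗.neg i := by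
  intro x hx
  rcases (𝓗.pos_union_neg_union_H i).ge (mem_univ x) with (h | h) | h
  · exact (interior_subset hx h).elim
  · exact h
  · obtain ⟨v, hv⟩ := 𝓗.exists_sum_mul_pos i
    have hcl : x ∈ closure (𝓗.pos i) := mem_closure_of_add_smul_mem (v := v) <| by
      filter_upwards [self_mem_nhdsWithin] with t ht using 𝓗.add_smul_mem_pos h hv ht
    rw [interior_compl] at hx
    exact (hx hcl).elim

theorem chamber_subset_pos_or_neg {C : Set (Fin d → ℝ)} (hC : C ∈ 𝓗.chambers) (i : Fin n) :
    C ⊆ 𝓗.pos i ∨ C ⊆ 𝓗.neg i := by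
  obtain ⟨x, -, rfl⟩ := hC
  refine isPreconnected_connectedComponentIn.subset_or_subset (𝓗.isOpen_pos i) (𝓗.isOpen_neg i)
    (𝓗.disjoint_pos_neg i) fun y hy => ?_
  exact ((𝓗.pos_union_neg_union_H i).ge (mem_univ y)).resolve_right
    (connectedComponentIn_subset _ _ hy i)

/-- Restricting the chambers to one side `W` of a separating pair of disjoint open sets restricts
the thickening to that side. -/
theorem thickening_sep_eq {S : Set (Set (Fin d → ℝ))} {W V : Set (Fin d → ℝ)} (hW : IsOpen W)
    (hV : IsOpen V) (hWV : Disjoint W V) (hS : ∀ C ∈ S, C ⊆ W ∨ C ⊆ V)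
    (hint : interior Vᶜ ⊆ W) : thickening {C ∈ S | C ⊆ W} = thickening S ∩ W := by
  apply Subset.antisymm
  · refine subset_inter
      (interior_mono (closure_mono (biUnion_subset_biUnion_left fun C hC => hC.1))) ?_
    refine (interior_mono (closure_minimal ?_ hV.isClosed_compl)).trans hint
    exact iUnion₂_subset fun C hC => hC.2.trans hWV.subset_compl_right
  · refine interior_maximal ?_ (isOpen_interior.inter hW)
    rintro x ⟨hx, hxW⟩
    refine closure_mono ?_ (hW.inter_closure ⟨hxW, interior_subset hx⟩)
    rintro y ⟨hyW, hy⟩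
    obtain ⟨C, hC, hyC⟩ := mem_iUnion₂.1 hy
    refine mem_iUnion₂.2 ⟨C, ⟨hC, (hS C hC).resolve_right fun h => ?_⟩, hyC⟩
    exact hWV.le_bot ⟨hyW, h hyC⟩

theorem stratum_pos_eq {S : Set (Set (Fin d → ℝ))} (hS : S ⊆ 𝓗.chambers) (e : Fin n)
    (A : Finset (Fin n)) :
    𝓗.stratum {C ∈ S | C ⊆ 𝓗.pos e} A = 𝓗.stratum S A ∩ 𝓗.pos e := by
  rw [stratum, thickening_sep_eq (𝓗.isOpen_pos e) (𝓗.isOpen_neg e) (𝓗.disjoint_pos_neg e)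
    (fun C hC => 𝓗.chamber_subset_pos_or_neg (hS hC) e) (𝓗.interior_compl_neg_subset e),
    stratum, inter_right_comm]

theorem stratum_neg_eq {S : Set (Set (Fin d → ℝ))} (hS : S ⊆ 𝓗.chambers) (e : Fin n)
    (A : Finset (Fin n)) :
    𝓗.stratum {C ∈ S | C ⊆ 𝓗.neg e} A = 𝓗.stratum S A ∩ 𝓗.neg e := by
  rw [stratum, thickening_sep_eq (𝓗.isOpen_neg e) (𝓗.isOpen_pos e) (𝓗.disjoint_pos_neg e).symm
    (fun C hC => (𝓗.chamber_subset_pos_or_neg (hS hC) e).symm) (𝓗.interior_compl_pos_subset e),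
    stratum, inter_right_comm]

theorem stratum_insert_eq (S : Set (Set (Fin d → ℝ))) (e : Fin n) (A : Finset (Fin n)) :
    𝓗.stratum S (insert e A) = 𝓗.stratum S A ∩ 𝓗.H e := by
  rw [stratum, stratum, Finset.set_biInter_insert, inter_assoc, inter_comm (𝓗.H e)]

/-- In general position, a hyperplane through a point of `⋂ i ∈ A, H i` crosses that flat
transversally. -/
theorem GeneralPosition.exists_transversal {𝓗 : Arrangement d n} (hgp : 𝓗.GeneralPosition)
    {A : Finset (Fin n)} {e : Fin n} (he : e ∉ A) {x : Fin d → ℝ}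
    (hx : x ∈ ⋂ i ∈ insert e A, 𝓗.H i) :
    ∃ v : Fin d → ℝ, 0 < ∑ j, 𝓗.normal e j * v j ∧
      ∀ i ∈ A, ∑ j, 𝓗.normal i j * v j = 0 := by
  have hcard : (insert e A).card ≤ d := by
    by_contra! hlt
    obtain ⟨B, hBA, hB⟩ := Finset.exists_subset_card_eq (Nat.succ_le_of_lt hlt)
    have : x ∈ ⋂ i ∈ B, 𝓗.H i := biInter_subset_biInter_left hBA hx
    rw [hgp.2 B hB] at this
    exact this
  have hli := hgp.1 _ hcard
  have hnot : 𝓗.normal e ∉ Submodule.span ℝ (𝓗.normal '' A) := by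
    have := hli.notMem_span_image (s := {i | (i : Fin n) ∈ A})
      (x := ⟨e, Finset.mem_insert_self e A⟩) he
    convert this using 3
    ext w
    constructor
    · rintro ⟨i, hi, rfl⟩
      exact ⟨⟨i, Finset.mem_insert_of_mem hi⟩, hi, rfl⟩
    · rintro ⟨i, hi, rfl⟩
      exact ⟨i, hi, rfl⟩
  obtain ⟨f, hfe, hf⟩ := Submodule.exists_le_ker_of_notMem hnot
  have hrep : ∀ a, f a = ∑ j, a j * f (Pi.single j 1) := fun a => by
    conv_lhs => rw [pi_eq_sum_univ' a, map_sum]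
    simp
  refine ⟨f (𝓗.normal e) • fun j => f (Pi.single j 1), ?_, fun i hi => ?_⟩
  · rw [(isLinearMap_sum_mul _).map_smul, ← hrep, smul_eq_mul]
    exact mul_self_pos.2 hfe
  · rw [(isLinearMap_sum_mul _).map_smul, ← hrep,
      LinearMap.mem_ker.1 (hf (Submodule.subset_span ⟨i, hi, rfl⟩)), smul_zero]

theorem isCut_stratum (hgp : 𝓗.GeneralPosition) (S : Set (Set (Fin d → ℝ))) {e : Fin n}
    {A : Finset (Fin n)} (he : e ∉ A) :
    IsCut (𝓗.stratum S A) (𝓗.stratum S A ∩ 𝓗.pos e) (𝓗.stratum S A ∩ 𝓗.neg e)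
      (𝓗.stratum S A ∩ 𝓗.H e) where
  eq_union := by
    rw [← inter_union_distrib_left, ← inter_union_distrib_left, pos_union_neg_union_H, inter_univ]
  disjoint := (𝓗.disjoint_pos_neg e).mono inter_subset_right inter_subset_right
  mem_nhdsWithin_left x hx :=
    inter_mem_nhdsWithin _ ((𝓗.isOpen_pos e).mem_nhds hx.2)
  mem_nhdsWithin_right x hx :=
    inter_mem_nhdsWithin _ ((𝓗.isOpen_neg e).mem_nhds hx.2)
  subset_closure_left := by
    rintro x ⟨⟨hxS, hxA⟩, hxe⟩
    obtain ⟨v, hv, hvA⟩ := hgp.exists_transversal he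
      (by rw [Finset.set_biInter_insert]; exact ⟨hxe, hxA⟩)
    refine mem_closure_of_add_smul_mem (v := v) ?_
    filter_upwards [self_mem_nhdsWithin, eventually_add_smul_mem_thickening hxS v] with t ht htS
    refine ⟨⟨htS, mem_iInter₂.2 fun i hi => ?_⟩, 𝓗.add_smul_mem_pos hxe hv ht⟩
    exact 𝓗.add_smul_mem_H (mem_iInter₂.1 hxA i hi) (hvA i hi) t
  subset_closure_right := by
    rintro x ⟨⟨hxS, hxA⟩, hxe⟩
    obtain ⟨v, hv, hvA⟩ := hgp.exists_transversal he
      (by rw [Finset.set_biInter_insert]; exact ⟨hxe, hxA⟩)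
    refine mem_closure_of_add_smul_mem (v := -v) ?_
    filter_upwards [self_mem_nhdsWithin, eventually_add_smul_mem_thickening hxS (-v)] with t ht htS
    refine ⟨⟨htS, mem_iInter₂.2 fun i hi => ?_⟩, 𝓗.add_smul_mem_neg hxe hv ht⟩
    refine 𝓗.add_smul_mem_H (mem_iInter₂.1 hxA i hi) ?_ t
    rw [(isLinearMap_sum_mul _).map_neg, hvA i hi, neg_zero]
  exists_isOpen x hx := by
    obtain ⟨r, hr, hball⟩ := Metric.isOpen_iff.1 isOpen_interior x hx.1
    have hconv : ∀ K : Set (Fin d → ℝ), Convex ℝ K →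
        IsPreconnected (Metric.ball x r ∩ (𝓗.stratum S A ∩ K)) := by
      intro K hK
      have : Metric.ball x r ∩ (𝓗.stratum S A ∩ K)
          = Metric.ball x r ∩ ((⋂ i ∈ A, 𝓗.H i) ∩ K) := by
        ext y
        exact ⟨fun h => ⟨h.1, h.2.1.2, h.2.2⟩, fun h => ⟨h.1, ⟨hball h.1, h.2.1⟩, h.2.2⟩⟩
      rw [this]
      exact ((convex_ball x r).inter ((𝓗.convex_iInter_H A).inter hK)).isPreconnected
    exact ⟨Metric.ball x r, Metric.isOpen_ball, Metric.mem_ball_self hr,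
      hconv _ (𝓗.convex_pos e), hconv _ (𝓗.convex_neg e), hconv _ (𝓗.convex_H e)⟩

/-- The sign vector of a point. -/
def signVector (x : Fin d → ℝ) (i : Fin n) : SignType :=
  SignType.sign (∑ j, 𝓗.normal i j * x j - 𝓗.offset i)

theorem signVector_eq_zero_iff {x : Fin d → ℝ} {i : Fin n} :
    𝓗.signVector x i = 0 ↔ x ∈ 𝓗.H i := by
  rw [signVector, sign_eq_zero_iff, sub_eq_zero]; rfl

theorem signVector_eq_one_iff {x : Fin d → ℝ} {i : Fin n} :
    𝓗.signVector x i = 1 ↔ x ∈ 𝓗.pos i := by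
  rw [signVector, sign_eq_one_iff, sub_pos]; rfl

theorem signVector_eq_neg_one_iff {x : Fin d → ℝ} {i : Fin n} :
    𝓗.signVector x i = -1 ↔ x ∈ 𝓗.neg i := by
  rw [signVector, sign_eq_neg_one_iff, sub_neg]; rfl

theorem convex_setOf_signVector_eq (σ : Fin n → SignType) : Convex ℝ {x | 𝓗.signVector x = σ} := by
  have h : {x | 𝓗.signVector x = σ} = ⋂ i, {x | 𝓗.signVector x i = σ i} := by
    ext x; simp [funext_iff]
  rw [h]
  refine convex_iInter fun i => ?_
  rcases SignType.trichotomy (σ i) with hi | hi | hi <;> rw [hi]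
  · simpa only [signVector_eq_neg_one_iff, ofPred_mem_eq] using 𝓗.convex_neg i
  · simpa only [signVector_eq_zero_iff, ofPred_mem_eq] using 𝓗.convex_H i
  · simpa only [signVector_eq_one_iff, ofPred_mem_eq] using 𝓗.convex_pos i

theorem mem_chamber_of_signVector_eq {C : Set (Fin d → ℝ)} (hC : C ∈ 𝓗.chambers)
    {x y : Fin d → ℝ} (hx : x ∈ C) (hxy : 𝓗.signVector y = 𝓗.signVector x) : y ∈ C := by
  have hxf : x ∈ 𝓗.free := subset_of_mem_connComps hC hx
  have hfree : {z | 𝓗.signVector z = 𝓗.signVector x} ⊆ 𝓗.free := by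
    intro z hz i hzi
    refine hxf i ?_
    rw [← signVector_eq_zero_iff, ← mem_ofPred.1 hz]
    exact 𝓗.signVector_eq_zero_iff.2 hzi
  exact (𝓗.convex_setOf_signVector_eq (𝓗.signVector x)).isPreconnected.subset_of_mem_connComps
    hfree hC ⟨x, rfl, hx⟩ hxy

theorem eventually_signVector_eq {x : Fin d → ℝ} {i : Fin n} (hx : x ∉ 𝓗.H i) :
    ∀ᶠ z in 𝓝 x, 𝓗.signVector z i = 𝓗.signVector x i := by
  rcases ((𝓗.pos_union_neg_union_H i).ge (mem_univ x)).resolve_right hx with h | h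
  · filter_upwards [(𝓗.isOpen_pos i).mem_nhds h] with z hz
    rw [𝓗.signVector_eq_one_iff.2 hz, 𝓗.signVector_eq_one_iff.2 h]
  · filter_upwards [(𝓗.isOpen_neg i).mem_nhds h] with z hz
    rw [𝓗.signVector_eq_neg_one_iff.2 hz, 𝓗.signVector_eq_neg_one_iff.2 h]

/-- Near two points with the same sign vector the arrangement looks the same. -/
theorem eventually_signVector_add_eq {x y : Fin d → ℝ} (h : 𝓗.signVector x = 𝓗.signVector y) :
    ∀ᶠ z in 𝓝 x, 𝓗.signVector (z + (y - x)) = 𝓗.signVector z := by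
  suffices ∀ i, ∀ᶠ z in 𝓝 x, 𝓗.signVector (z + (y - x)) i = 𝓗.signVector z i by
    filter_upwards [Filter.eventually_all.2 this] with z hz using funext hz
  intro i
  by_cases hx : x ∈ 𝓗.H i
  · have hy : y ∈ 𝓗.H i := by
      rwa [← signVector_eq_zero_iff, ← h, signVector_eq_zero_iff]
    refine Filter.Eventually.of_forall fun z => ?_
    have hl := isLinearMap_sum_mul (𝓗.normal i)
    have hx : ∑ j, 𝓗.normal i j * x j = 𝓗.offset i := hx
    have hy : ∑ j, 𝓗.normal i j * y j = 𝓗.offset i := hy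
    rw [signVector, hl.map_add, hl.map_sub, hx, hy, sub_self, add_zero, signVector]
  · have hy : y ∉ 𝓗.H i := by
      rwa [← signVector_eq_zero_iff, ← h, signVector_eq_zero_iff]
    have ht : Filter.Tendsto (fun z => z + (y - x)) (𝓝 x) (𝓝 y) := by
      have : Continuous fun z : Fin d → ℝ => z + (y - x) := by fun_prop
      simpa using this.tendsto x
    filter_upwards [𝓗.eventually_signVector_eq hx, ht.eventually (𝓗.eventually_signVector_eq hy)]
      with z hz hz'
    rw [hz, hz', h]

theorem mem_thickening_of_signVector_eq {S : Set (Set (Fin d → ℝ))} (hS : S ⊆ 𝓗.chambers)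
    {x y : Fin d → ℝ} (h : 𝓗.signVector x = 𝓗.signVector y) (hx : x ∈ thickening S) :
    y ∈ thickening S := by
  let τ : (Fin d → ℝ) ≃ₜ (Fin d → ℝ) := Homeomorph.addRight (y - x)
  have hτ : τ x = y := add_sub_cancel x y
  suffices hx' : x ∈ interior (closure (τ ⁻¹' ⋃ C ∈ S, C)) by
    rw [← τ.preimage_closure, ← τ.preimage_interior, mem_preimage, hτ] at hx'
    exact hx'
  rw [thickening, mem_interior_iff_mem_nhds] at hx
  rw [mem_interior_iff_mem_nhds]
  filter_upwards [hx, eventually_eventually_nhds.2 (𝓗.eventually_signVector_add_eq h)] with z hz hzs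
  rw [mem_closure_iff_frequently] at hz ⊢
  refine (hz.and_eventually hzs).mono fun w hw => ?_
  obtain ⟨C, hC, hwC⟩ := mem_iUnion₂.1 hw.1
  exact mem_iUnion₂.2 ⟨C, hC, 𝓗.mem_chamber_of_signVector_eq (hS hC) hwC hw.2⟩

theorem mem_stratum_of_signVector_eq {S : Set (Set (Fin d → ℝ))} (hS : S ⊆ 𝓗.chambers)
    {A : Finset (Fin n)} {x y : Fin d → ℝ} (h : 𝓗.signVector x = 𝓗.signVector y)
    (hx : x ∈ 𝓗.stratum S A) : y ∈ 𝓗.stratum S A := by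
  refine ⟨𝓗.mem_thickening_of_signVector_eq hS h hx.1, mem_iInter₂.2 fun i hi => ?_⟩
  rw [← signVector_eq_zero_iff, ← h, signVector_eq_zero_iff]
  exact mem_iInter₂.1 hx.2 i hi

theorem finite_connComps_stratum {S : Set (Set (Fin d → ℝ))} (hS : S ⊆ 𝓗.chambers)
    (A : Finset (Fin n)) : (connComps (𝓗.stratum S A)).Finite := by
  choose pt hpt using fun c : connComps (𝓗.stratum S A) => nonempty_of_mem_connComps c.2
  have hinj : Function.Injective fun c => 𝓗.signVector (pt c) := by
    intro c c' hcc
    have hsub := (𝓗.convex_setOf_signVector_eq (𝓗.signVector (pt c))).isPreconnected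
      |>.subset_of_mem_connComps (fun z hz => 𝓗.mem_stratum_of_signVector_eq hS hz.symm
        (subset_of_mem_connComps c.2 (hpt c))) c.2 ⟨pt c, rfl, hpt c⟩
    exact Subtype.ext (eq_of_mem_connComps c.2 c'.2 ⟨pt c', hsub hcc.symm, hpt c'⟩)
  have := Finite.of_injective _ hinj
  exact Set.toFinite _

end Arrangement

/-- (i) The connected components of the gluing graph `Γ_{A,e}` are
in bijection with the connected components of `T_S(A)`; (ii) consequently
`|conn(T_{S⁺}(A))| + |conn(T_{S⁻}(A))| ≤ |conn(T_S(A))| + |conn(T_S(A ∪ {e}))|`. -/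
theorem stmt3 {d n : ℕ} (𝓗 : Arrangement d n) (hgp : 𝓗.GeneralPosition)
    (S : Set (Set (Fin d → ℝ))) (hS : S ⊆ 𝓗.chambers)
    (e : Fin n) (A : Finset (Fin n)) (hA : A ∈ 𝓗.supp S) (he : e ∉ A) :
    Nonempty ((gluingGraph 𝓗 S e A).ConnectedComponent ≃
      (connComps (𝓗.stratum S A))) ∧
    (connComps (𝓗.stratum {C ∈ S | C ⊆ 𝓗.pos e} A)).ncard +
        (connComps (𝓗.stratum {C ∈ S | C ⊆ 𝓗.neg e} A)).ncard ≤
      (connComps (𝓗.stratum S A)).ncard +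
        (connComps (𝓗.stratum S (insert e A))).ncard := by
  have hcut := 𝓗.isCut_stratum hgp S he
  rw [← 𝓗.stratum_pos_eq hS, ← 𝓗.stratum_neg_eq hS, ← 𝓗.stratum_insert_eq] at hcut
  exact ⟨hcut.nonempty_connectedComponent_equiv, hcut.ncard_add_ncard_le
    (𝓗.finite_connComps_stratum (fun C hC => hS hC.1) A)
    (𝓗.finite_connComps_stratum (fun C hC => hS hC.1) A) (𝓗.finite_connComps_stratum hS _)⟩
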